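/- Let A be a real N×p matrix such that AᵀA is invertible, and let Ξ be a real symmetric positive definite N×N matrix. Then the p×p matrix AᵀΞ⁻¹A − (AᵀA)(AᵀΞA)⁻¹(AᵀA) is positive semidefinite; equivalently, for every v ∈ ℝᵖ one has ⟨v, (AᵀA)(AᵀΞA)⁻¹(AᵀA)v⟩² ≤ ⟨v, AᵀΞ⁻¹Av⟩ · ⟨v, (AᵀA)(AᵀΞA)⁻¹(AᵀA)v⟩. (This is the content of Theorem 5.5: with A the stacked gradient ∇_θ X̄ and Ξ the covariance matrix Ξ^{θ,H,n}, the difference of inverse asymptotic variances (M(θ,H;n))⁻¹ − (M^H(θ,H;n))⁻¹ is negative semidefinite, i.e. the minimum contrast estimator has asymptotic variance no larger than the trajectory-fitting estimator.) -/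

import Mathlib

open MeasureTheory ProbabilityTheory Filter Topology

noncomputable section

/-- The correlation function ρ(j;H) of second-order filtered increments of fBm. -/
def rho (H : ℝ) (j : ℤ) : ℝ :=
  (-|(j : ℝ) - 2| ^ (2 * H) + 4 * |(j : ℝ) - 1| ^ (2 * H) - 6 * |(j : ℝ)| ^ (2 * H)
      + 4 * |(j : ℝ) + 1| ^ (2 * H) - |(j : ℝ) + 2| ^ (2 * H)) / (2 * (4 - 2 ^ (2 * H)))

/-- ς₁²(H) := 2 ∑_{j∈ℤ} ρ(j;H)². -/
def varsigma1sq (H : ℝ) : ℝ := 2 * ∑' j : ℤ, (rho H j) ^ 2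

/-- ρ̃(j;H). -/
def rhoTilde (H : ℝ) (j : ℤ) : ℝ :=
  (-|(j : ℝ) - 3| ^ (2 * H) + 2 * |(j : ℝ) - 2| ^ (2 * H) + |(j : ℝ) - 1| ^ (2 * H)
      - 4 * |(j : ℝ)| ^ (2 * H) + |(j : ℝ) + 1| ^ (2 * H) + 2 * |(j : ℝ) + 2| ^ (2 * H)
      - |(j : ℝ) + 3| ^ (2 * H)) / (2 * (4 - 2 ^ (2 * H)) * 2 ^ H)

/-- ς₂²(H) := ∑_{j∈ℤ} ρ̃(j;H)². -/
def varsigma2sq (H : ℝ) : ℝ := ∑' j : ℤ, (rhoTilde H j) ^ 2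

/-- A real-valued process `W` is a fractional Brownian motion with Hurst index `H` under `P`:
its finite-dimensional distributions are centered Gaussian (i.e. every finite linear combination
of values of the process is a centered real Gaussian random variable) with covariance
`E[W_s W_t] = (s^{2H} + t^{2H} - |t-s|^{2H})/2`. -/
def IsFBM {Ω : Type*} [MeasurableSpace Ω] (P : Measure Ω) (W : ℝ → Ω → ℝ) (H : ℝ) : Prop :=
  (∀ t : ℝ, Measurable (W t)) ∧
  (∀ (s : Finset ℝ) (c : ℝ → ℝ), ∃ v : NNReal,
      Measure.map (fun ω => ∑ t ∈ s, c t * W t ω) P = gaussianReal 0 v) ∧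
  (∀ s t : ℝ, 0 ≤ s → 0 ≤ t →
      ∫ ω, W s ω * W t ω ∂P = (s ^ (2 * H) + t ^ (2 * H) - |t - s| ^ (2 * H)) / 2)

/-- The second-order filtered increment
`Δ^{(2)}_{n,k} z = z_{t^n_k} - 2 z_{t^n_{k-1}} + z_{t^n_{k-2}}` with `t^n_k = T k / n`. -/
def Delta2 {Ω : Type*} (T : ℝ) (n k : ℕ) (z : ℝ → Ω → ℝ) (ω : Ω) : ℝ :=
  z (T * k / n) ω - 2 * z (T * ((k : ℝ) - 1) / n) ω + z (T * ((k : ℝ) - 2) / n) ω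

/-- Convergence in distribution (weak convergence of the laws) of real random variables. -/
def TendstoInDistribution {Ω : Type*} [MeasurableSpace Ω] (P : Measure Ω)
    (f : ℕ → Ω → ℝ) (μ : Measure ℝ) : Prop :=
  ∀ g : BoundedContinuousFunction ℝ ℝ,
    Tendsto (fun n => ∫ ω, g (f n ω) ∂P) atTop (𝓝 (∫ x, g x ∂μ))

/-- The squared Frobenius norm |σ|² of a matrix. -/
def frobSq {m mt : ℕ} (σ : Matrix (Fin m) (Fin mt) ℝ) : ℝ := ∑ i, ∑ j, (σ i j) ^ 2

/-- |σ v|², the squared Euclidean norm of the matrix-vector product σ v. -/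
def normSqMulVec {m mt : ℕ} (σ : Matrix (Fin m) (Fin mt) ℝ) (v : Fin mt → ℝ) : ℝ :=
  ∑ i, (∑ j, σ i j * v j) ^ 2

/-- The normalized cross second-order variation
`V^{j,q}_{n,T} = (n^{2H-1}/(T^{2H}(4-2^{2H}))) ∑_{k=2}^n Δ^{(2)}_{n,k} W^{H,j} Δ^{(2)}_{n,k} W^{H,q}`. -/
def Vstat {Ω : Type*} {mt : ℕ} (T H : ℝ) (W : Fin mt → ℝ → Ω → ℝ) (n : ℕ)
    (j q : Fin mt) (ω : Ω) : ℝ :=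
  ((n : ℝ) ^ (2 * H - 1) / (T ^ (2 * H) * (4 - 2 ^ (2 * H)))) *
    ∑ k ∈ Finset.Icc 2 n, Delta2 T n k (W j) ω * Delta2 T n k (W q) ω

/-- The constant `c_σ̄ = (1/|σ̄|⁴) ∑_{i,k} ∑_{j,q} σ̄_{ij} σ̄_{iq} σ̄_{kj} σ̄_{kq}`. -/
def cSigma {m mt : ℕ} (σ : Matrix (Fin m) (Fin mt) ℝ) : ℝ :=
  (1 / (frobSq σ) ^ 2) * ∑ i, ∑ k, ∑ j, ∑ q, σ i j * σ i q * σ k j * σ k q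

/-- φ_{n,T}(x) = (T/n)^{2x} (4 - 2^{2x}). -/
def phi (T : ℝ) (n : ℕ) (x : ℝ) : ℝ := (T / n) ^ (2 * x) * (4 - 2 ^ (2 * x))

end

noncomputable section

/-!
Write the Gram matrix of the columns of `ΞA` and `B` with respect to the form `Ξ⁻¹` in block form,
`[ΞA B]ᴴ Ξ⁻¹ [ΞA B] = [[AᴴΞA, AᴴB], [BᴴA, BᴴΞ⁻¹B]]`. It is positive semidefinite, hence so is the
Schur complement of its upper left block, which for `B = A` is the matrix in question.
The inequality compares the two quadratic forms at `v` and multiplies by the smaller one, which is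
nonnegative.
-/

section

open Matrix

variable {n k l R K : Type*} [Fintype n]

theorem mulVec_injective_of_isUnit_mul [Semiring R] [Fintype k] [DecidableEq k]
    {B : Matrix k n R} {A : Matrix n k R} (h : IsUnit (B * A)) : Function.Injective A.mulVec := by
  have hcomp : Function.Injective (B.mulVec ∘ A.mulVec) := by
    simpa only [Function.comp_def, mulVec_mulVec] using mulVec_injective_of_isUnit h
  exact hcomp.of_comp

theorem sq_star_dotProduct_mulVec_le [CommRing R] [PartialOrder R] [StarRing R] [StarOrderedRing R]
    {P Q : Matrix n n R} (hQ : Q.PosSemidef) (hPQ : (P - Q).PosSemidef) (v : n → R) :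
    (star v ⬝ᵥ Q *ᵥ v) ^ 2 ≤ (star v ⬝ᵥ P *ᵥ v) * (star v ⬝ᵥ Q *ᵥ v) := by
  have hle : star v ⬝ᵥ Q *ᵥ v ≤ star v ⬝ᵥ P *ᵥ v := by
    simpa only [sub_mulVec, dotProduct_sub, sub_nonneg] using hPQ.dotProduct_mulVec_nonneg v
  rw [sq]
  exact mul_le_mul_of_nonneg_right hle (hQ.dotProduct_mulVec_nonneg v)

theorem posSemidef_conjTranspose_mul_mul_inv_mul [Fintype k] [DecidableEq k] [Finite l]
    [CommRing R] [PartialOrder R] [StarRing R] {Ξ : Matrix n n R} (hΞ : Ξ.PosSemidef)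
    (A : Matrix n k R) (B : Matrix n l R) :
    (Bᴴ * A * (Aᴴ * Ξ * A)⁻¹ * (Aᴴ * B)).PosSemidef := by
  simpa only [conjTranspose_mul, conjTranspose_conjTranspose] using
    (hΞ.conjTranspose_mul_mul_same A).inv.conjTranspose_mul_mul_same (Aᴴ * B)

theorem posSemidef_fromBlocks_conjTranspose_mul_mul_inv [Finite k] [Finite l] [DecidableEq n]
    [CommRing R] [PartialOrder R] [StarRing R] {Ξ : Matrix n n R} (hΞ : Ξ.PosSemidef)
    (hunit : IsUnit Ξ) (A : Matrix n k R) (B : Matrix n l R) :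
    (fromBlocks (Aᴴ * Ξ * A) (Aᴴ * B) (Aᴴ * B)ᴴ (Bᴴ * Ξ⁻¹ * B)).PosSemidef := by
  have hdet : IsUnit Ξ.det := (isUnit_iff_isUnit_det Ξ).mp hunit
  have hgram : (fromCols (Ξ * A) B)ᴴ * Ξ⁻¹ * fromCols (Ξ * A) B =
      fromBlocks (Aᴴ * Ξ * A) (Aᴴ * B) (Aᴴ * B)ᴴ (Bᴴ * Ξ⁻¹ * B) := by
    rw [conjTranspose_fromCols_eq_fromRows_conjTranspose, fromRows_mul, fromRows_mul_fromCols,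
      conjTranspose_mul, hΞ.isHermitian.eq, mul_nonsing_inv_cancel_right _ _ hdet,
      Matrix.mul_assoc Bᴴ, nonsing_inv_mul_cancel_left _ _ hdet, conjTranspose_mul,
      conjTranspose_conjTranspose, ← Matrix.mul_assoc Aᴴ]
  exact hgram ▸ hΞ.inv.conjTranspose_mul_mul_same _

variable [Fintype k] [DecidableEq n] [DecidableEq k]
  [Field K] [PartialOrder K] [StarRing K] [StarOrderedRing K]
  {A : Matrix n k K} {Ξ : Matrix n n K}

theorem posSemidef_conjTranspose_mul_inv_mul_sub [Finite l] (B : Matrix n l K) (hΞ : Ξ.PosDef)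
    (hA : Function.Injective A.mulVec) :
    (Bᴴ * Ξ⁻¹ * B - Bᴴ * A * (Aᴴ * Ξ * A)⁻¹ * (Aᴴ * B)).PosSemidef := by
  have hM : (Aᴴ * Ξ * A).PosDef := hΞ.conjTranspose_mul_mul_same hA
  let _ : Invertible (Aᴴ * Ξ * A) := hM.isUnit.invertible
  have hSchur := (hM.fromBlocks₁₁ (Aᴴ * B) (Bᴴ * Ξ⁻¹ * B)).mp
    (posSemidef_fromBlocks_conjTranspose_mul_mul_inv hΞ.posSemidef hΞ.isUnit A B)
  rwa [conjTranspose_mul, conjTranspose_conjTranspose] at hSchur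

theorem stmt6_general [Fintype l] (B : Matrix n l K) (hΞ : Ξ.PosDef)
    (hA : Function.Injective A.mulVec) :
    (Bᴴ * Ξ⁻¹ * B - Bᴴ * A * (Aᴴ * Ξ * A)⁻¹ * (Aᴴ * B)).PosSemidef ∧
    ∀ v : l → K,
      (star v ⬝ᵥ (Bᴴ * A * (Aᴴ * Ξ * A)⁻¹ * (Aᴴ * B)) *ᵥ v) ^ 2 ≤
        (star v ⬝ᵥ (Bᴴ * Ξ⁻¹ * B) *ᵥ v) *
          (star v ⬝ᵥ (Bᴴ * A * (Aᴴ * Ξ * A)⁻¹ * (Aᴴ * B)) *ᵥ v) :=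
  have hsub := posSemidef_conjTranspose_mul_inv_mul_sub B hΞ hA
  have hsandwich := posSemidef_conjTranspose_mul_mul_inv_mul hΞ.posSemidef A B
  ⟨hsub, sq_star_dotProduct_mulVec_le hsandwich hsub⟩

end

open Matrix in
/-- Theorem 5.5: AᵀΞ⁻¹A − (AᵀA)(AᵀΞA)⁻¹(AᵀA) is positive semidefinite; equivalently the stated
Cauchy–Schwarz-type inequality holds for every v. -/
theorem stmt6 {N p : ℕ} (A : Matrix (Fin N) (Fin p) ℝ) (Ξ : Matrix (Fin N) (Fin N) ℝ)
    (hA : IsUnit (Aᵀ * A)) (hΞsymm : Ξ.IsSymm) (hΞ : Ξ.PosDef) :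
    (Aᵀ * Ξ⁻¹ * A - (Aᵀ * A) * (Aᵀ * Ξ * A)⁻¹ * (Aᵀ * A)).PosSemidef ∧
    ∀ v : Fin p → ℝ,
      (v ⬝ᵥ ((Aᵀ * A) * (Aᵀ * Ξ * A)⁻¹ * (Aᵀ * A)).mulVec v) ^ 2 ≤
        (v ⬝ᵥ (Aᵀ * Ξ⁻¹ * A).mulVec v) *
          (v ⬝ᵥ ((Aᵀ * A) * (Aᵀ * Ξ * A)⁻¹ * (Aᵀ * A)).mulVec v) := by
  simpa only [conjTranspose_eq_transpose_of_trivial, star_trivial] using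
    stmt6_general A hΞ (mulVec_injective_of_isUnit_mul hA)

end
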